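/- arXiv:2002.04771 — 5 statements merged into one kernel-verified Lean document; each statement's English description precedes it below -/
import Mathlib

section
/- A subset C of U is a copy for G if and only if for every finite subset F of C and every x ∈ U \ F there exists g in the pointwise stabilizer G⟨F⟩ with g(x) ∈ C. -/
/-- `f` is adherent to the subgroup `G` of permutations of `U`:
for every finite set `F` there is `g ∈ G` agreeing with `f` on `F`. -/
def IsAdherent {U : Type*} (G : Subgroup (Equiv.Perm U)) (f : U → U) : Prop :=
  ∀ F : Finset U, ∃ g ∈ G, ∀ x ∈ F, f x = g x

/-- `C` is a copy for the group `G`: the range of a function adherent to `G`. -/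
def IsCopy {U : Type*} (G : Subgroup (Equiv.Perm U)) (C : Set U) : Prop :=
  ∃ f : U → U, IsAdherent G f ∧ Set.range f = C

/-!
If `f` is adherent, `F = f '' E` is a finite part of its range, and `h, k ∈ G` agree with `f` on
`E` and on `E ∪ {h⁻¹ x}` respectively, then `k * h⁻¹` fixes `F` pointwise and sends `x` to
`f (h⁻¹ x)`.

Conversely, an adherent function with range `C` is built by back and forth from restrictions of
elements of `G` to finite sets mapped into `C`. A point is added to the domain by composing with an
element of the stabilizer of the current finite image; a point of `C` is added to the image by
adding its preimage under the current permutation to the domain, which leaves the permutation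
unchanged.
-/

/-- The orbit condition on `C`: for every finite `F ⊆ C`, the orbits of the pointwise stabilizer
`G⟨F⟩` outside `F` all meet `C`. Membership in `G⟨F⟩` is spelled out pointwise. -/
def StabilizerOrbitsMeet {U : Type*} (G : Subgroup (Equiv.Perm U)) (C : Set U) : Prop :=
  ∀ F : Finset U, ↑F ⊆ C → ∀ x : U, x ∉ F → ∃ g ∈ G, (∀ a ∈ F, g a = a) ∧ g x ∈ C

/-- A finite partial map into `C` that extends to an element of `G`: the restriction of `perm` to
`dom`. The extending permutation is part of the data, so two approximations may restrict to the
same partial map; hence they are only preordered by extension. -/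
structure FiniteApproximation {U : Type*} (G : Subgroup (Equiv.Perm U)) (C : Set U) where
  perm : Equiv.Perm U
  dom : Finset U
  perm_mem : perm ∈ G
  apply_mem : ∀ x ∈ dom, perm x ∈ C

section

variable {U : Type*} {G : Subgroup (Equiv.Perm U)} {C : Set U}

theorem IsAdherent.exists_stabilizer_apply_mem_range {f : U → U} (hf : IsAdherent G f)
    {F : Finset U} (hF : ↑F ⊆ Set.range f) (x : U) :
    ∃ g ∈ G, (∀ a ∈ F, g a = a) ∧ g x ∈ Set.range f := by
  classical
  rw [← Set.image_univ] at hF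
  obtain ⟨E, -, rfl⟩ := Finset.subset_set_image_iff.1 hF
  obtain ⟨h, hG, hh⟩ := hf E
  obtain ⟨k, kG, hk⟩ := hf (insert (h⁻¹ x) E)
  refine ⟨k * h⁻¹, G.mul_mem kG (G.inv_mem hG), ?_, h⁻¹ x, hk _ (Finset.mem_insert_self _ _)⟩
  refine Finset.forall_mem_image.2 fun e he ↦ ?_
  calc k (h⁻¹ (f e)) = k e := by rw [Equiv.Perm.inv_eq_iff_eq.2 (hh e he)]
    _ = f e := (hk e (Finset.mem_insert_of_mem he)).symm

theorem IsCopy.stabilizerOrbitsMeet (hC : IsCopy G C) : StabilizerOrbitsMeet G C := by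
  obtain ⟨f, hf, rfl⟩ := hC
  exact fun _ hF x _ ↦ hf.exists_stabilizer_apply_mem_range hF x

namespace FiniteApproximation

instance : Preorder (FiniteApproximation G C) where
  le p q := p.dom ⊆ q.dom ∧ Set.EqOn q.perm p.perm p.dom
  le_refl p := ⟨Finset.Subset.rfl, Set.eqOn_refl _ _⟩
  le_trans _ _ _ hpq hqr := ⟨hpq.1.trans hqr.1, (hqr.2.mono hpq.1).trans hpq.2⟩

instance : Inhabited (FiniteApproximation G C) where
  default := ⟨1, ∅, G.one_mem, by simp⟩

theorem exists_le_perm_eq_mem_dom {p : FiniteApproximation G C} {x : U} (hx : p.perm x ∈ C) :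
    ∃ q, p ≤ q ∧ q.perm = p.perm ∧ x ∈ q.dom := by
  classical
  exact ⟨⟨p.perm, insert x p.dom, p.perm_mem, (Finset.forall_mem_insert ..).2 ⟨hx, p.apply_mem⟩⟩,
    ⟨Finset.subset_insert _ _, Set.eqOn_refl _ _⟩, rfl, Finset.mem_insert_self _ _⟩

theorem exists_le_apply_mem (hC : StabilizerOrbitsMeet G C) (p : FiniteApproximation G C)
    (x : U) : ∃ q, p ≤ q ∧ q.perm x ∈ C := by
  classical
  by_cases hx : x ∈ p.dom
  · exact ⟨p, le_rfl, p.apply_mem x hx⟩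
  have himage : ↑(p.dom.image p.perm) ⊆ C := Finset.forall_mem_image.2 p.apply_mem
  obtain ⟨h, hG, hfix, hhx⟩ := hC _ himage (p.perm x) (by simpa using hx)
  have hagree : Set.EqOn (h * p.perm) p.perm p.dom :=
    fun a ha ↦ hfix _ (Finset.mem_image_of_mem _ ha)
  exact ⟨⟨h * p.perm, p.dom, G.mul_mem hG p.perm_mem,
    fun a ha ↦ (hagree ha).symm ▸ p.apply_mem a ha⟩, ⟨Finset.Subset.rfl, hagree⟩, hhx⟩

theorem isCofinal_setOf_mem_dom (hC : StabilizerOrbitsMeet G C) (x : U) :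
    IsCofinal {p : FiniteApproximation G C | x ∈ p.dom} := fun p ↦ by
  obtain ⟨q, hpq, hqx⟩ := p.exists_le_apply_mem hC x
  obtain ⟨r, hqr, -, hxr⟩ := exists_le_perm_eq_mem_dom hqx
  exact ⟨r, hxr, hpq.trans hqr⟩

theorem isCofinal_setOf_mem_image {c : U} (hc : c ∈ C) :
    IsCofinal {p : FiniteApproximation G C | c ∈ p.perm '' p.dom} := fun p ↦ by
  have hpc : p.perm (p.perm.symm c) = c := p.perm.apply_symm_apply c
  obtain ⟨q, hpq, hperm, hq⟩ := exists_le_perm_eq_mem_dom (p := p) (hpc.symm ▸ hc)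
  exact ⟨q, ⟨p.perm.symm c, hq, hperm ▸ hpc⟩, hpq⟩

theorem exists_generic_ideal [Countable U] (hC : StabilizerOrbitsMeet G C) :
    ∃ I : Order.Ideal (FiniteApproximation G C),
      (∀ x, ∃ p ∈ I, x ∈ p.dom) ∧ ∀ c ∈ C, ∃ p ∈ I, c ∈ p.perm '' p.dom := by
  have := Encodable.ofCountable (U ⊕ C)
  let requirement : U ⊕ C → Order.Cofinal (FiniteApproximation G C) :=
    Sum.elim (fun x ↦ ⟨_, isCofinal_setOf_mem_dom hC x⟩)
      fun c ↦ ⟨_, isCofinal_setOf_mem_image c.2⟩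
  have meets (i) := Order.cofinal_meets_idealOfCofinals default requirement i
  refine ⟨Order.idealOfCofinals default requirement, fun x ↦ ?_, fun c hc ↦ ?_⟩
  · obtain ⟨p, hx, hp⟩ := meets (.inl x)
    exact ⟨p, hp, hx⟩
  · obtain ⟨p, hc, hp⟩ := meets (.inr ⟨c, hc⟩)
    exact ⟨p, hp, hc⟩

theorem exists_eqOn_of_ideal {I : Order.Ideal (FiniteApproximation G C)}
    (hdom : ∀ x, ∃ p ∈ I, x ∈ p.dom) : ∃ f : U → U, ∀ p ∈ I, Set.EqOn f p.perm p.dom := by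
  choose p hpI hp using hdom
  refine ⟨fun x ↦ (p x).perm x, fun q hq x hx ↦ ?_⟩
  obtain ⟨r, -, hpr, hqr⟩ := I.directed (p x) (hpI x) q hq
  exact (hpr.2 (hp x)).symm.trans (hqr.2 hx)

theorem exists_mem_ideal_subset_dom {I : Order.Ideal (FiniteApproximation G C)}
    (hdom : ∀ x, ∃ p ∈ I, x ∈ p.dom) (F : Finset U) : ∃ p ∈ I, F ⊆ p.dom := by
  have hdirected : DirectedOn (fun p q : FiniteApproximation G C ↦ (p.dom : Set U) ⊆ q.dom) I :=
    I.directed.mono fun _ _ hpq ↦ hpq.1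
  exact hdirected.exists_mem_subset_of_finset_subset_biUnion I.nonempty
    fun x _ ↦ Set.mem_iUnion₂.2 <| by simpa using hdom x

end FiniteApproximation

open FiniteApproximation in
theorem StabilizerOrbitsMeet.isCopy [Countable U] (hC : StabilizerOrbitsMeet G C) :
    IsCopy G C := by
  obtain ⟨I, hdom, himage⟩ := exists_generic_ideal hC
  obtain ⟨f, hf⟩ := exists_eqOn_of_ideal hdom
  refine ⟨f, fun F ↦ ?_, Set.Subset.antisymm ?_ fun c hc ↦ ?_⟩
  · obtain ⟨p, hp, hF⟩ := exists_mem_ideal_subset_dom hdom F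
    exact ⟨p.perm, p.perm_mem, fun x hx ↦ hf p hp (hF hx)⟩
  · rintro _ ⟨x, rfl⟩
    obtain ⟨p, hp, hx⟩ := hdom x
    exact (hf p hp hx).symm ▸ p.apply_mem x hx
  · obtain ⟨p, hp, x, hx, rfl⟩ := himage c hc
    exact ⟨x, hf p hp hx⟩

end

/-- Theorem (characterization of copies): `C` is a copy for `G` iff for every finite
`F ⊆ C` and every `x ∉ F` there is `g` in the pointwise stabilizer of `F` with `g x ∈ C`. -/
theorem copy_characterization {U : Type*} [Countable U] [Infinite U]
    (G : Subgroup (Equiv.Perm U)) (C : Set U) :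
    IsCopy G C ↔
      ∀ F : Finset U, ↑F ⊆ C → ∀ x : U, x ∉ F →
        ∃ g ∈ G, (∀ a ∈ F, g a = a) ∧ g x ∈ C :=
  ⟨IsCopy.stabilizerOrbitsMeet, StabilizerOrbitsMeet.isCopy⟩
end

section
/- The set cl(G)[U] of copies for G has cardinality either 1 or 2^ℵ₀ (the cardinality of the continuum). -/
/-!
If every adherent function is surjective, then `U` is the only copy. Otherwise, composing a
non-surjective adherent function with inverses of elements of `G` produces, for every finite set,
a non-surjective adherent function fixing that set pointwise. Hence there are adherent functions
`k 0, k 1, …` and points `y n ∉ range (k n)` such that `k n` fixes `y m` for all `m < n` and every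
point is fixed by almost all `k n`. For `S ⊆ ℕ`, let `f_S` be the infinite composite
`k s₀ ∘ k s₁ ∘ ⋯`, where `s₀ < s₁ < ⋯` are the elements of `S`. If `P` denotes the part of this
composite with indices below `n`, then `n ∈ S` exactly when `P (y n) ∉ range f_S`, so `S` can be
read off the copy `range f_S` by recursion.
-/

open Set Filter Function Cardinal

section

variable {U : Type*}

namespace IsAdherent

variable {G : Subgroup (Equiv.Perm U)} {f f' : U → U}

theorem injective (hf : IsAdherent G f) : Injective f := by
  classical
  intro x y hxy
  obtain ⟨g, -, hg⟩ := hf {x, y}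
  have hx : f x = g x := hg x (by simp)
  have hy : f y = g y := hg y (by simp)
  exact g.injective (by rw [← hx, ← hy, hxy])

theorem of_mem {g : Equiv.Perm U} (hg : g ∈ G) : IsAdherent G g :=
  fun _ => ⟨g, hg, fun _ _ => rfl⟩

protected theorem id : IsAdherent G id :=
  of_mem G.one_mem

theorem comp (hf : IsAdherent G f) (hf' : IsAdherent G f') : IsAdherent G (f ∘ f') := by
  classical
  intro F
  obtain ⟨g', hg', hfg'⟩ := hf' F
  obtain ⟨g, hg, hfg⟩ := hf (F.image f')
  refine ⟨g * g', G.mul_mem hg hg', fun x hx => ?_⟩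
  calc f (f' x) = g (f' x) := hfg _ (Finset.mem_image_of_mem _ hx)
    _ = g (g' x) := by rw [hfg' x hx]

theorem of_eventually_eq {ι : Type*} {l : Filter ι} [l.NeBot] {φ : ι → U → U}
    (hφ : ∀ i, IsAdherent G (φ i)) (hf : ∀ x, ∀ᶠ i in l, f x = φ i x) : IsAdherent G f := by
  intro F
  obtain ⟨i, hi⟩ := ((eventually_all_finset F).2 fun x _ => hf x).exists
  obtain ⟨g, hg, hφg⟩ := hφ i F
  exact ⟨g, hg, fun x hx => (hi x hx).trans (hφg x hx)⟩

theorem exists_fixing_not_surjective (hf : IsAdherent G f) (hns : ¬ Surjective f)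
    (F : Finset U) : ∃ k, IsAdherent G k ∧ (∀ x ∈ F, k x = x) ∧ ¬ Surjective k := by
  obtain ⟨g, hg, hfg⟩ := hf F
  refine ⟨⇑g⁻¹ ∘ f, (of_mem (G.inv_mem hg)).comp hf, fun x hx => ?_, ?_⟩
  · rw [comp_apply, hfg x hx]
    exact g.symm_apply_apply x
  · rwa [(g⁻¹).comp_surjective]

end IsAdherent

theorem IsAdherent.exists_seq_fixing_notMem_range [Countable U] {G : Subgroup (Equiv.Perm U)}
    {f : U → U} (hf : IsAdherent G f) (hns : ¬ Surjective f) :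
    ∃ (k : ℕ → U → U) (y : ℕ → U), (∀ n, IsAdherent G (k n)) ∧
      (∀ x, ∀ᶠ n in atTop, k n x = x) ∧ (∀ m n, m < n → k n (y m) = y m) ∧
      ∀ n, y n ∉ range (k n) := by
  classical
  choose k hk hfix hk_ns using hf.exists_fixing_not_surjective hns
  choose y hy using fun F => not_forall.mp (hk_ns F)
  have : Nonempty U := ⟨y ∅⟩
  obtain ⟨e, he⟩ := exists_surjective_nat U
  let F : ℕ → Finset U := Nat.rec ∅ fun n A => insert (e n) (insert (y A) A)
  have hF : Monotone F := monotone_nat_of_le_succ fun n =>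
    (Finset.subset_insert _ _).trans (Finset.subset_insert _ _)
  have he_mem (n : ℕ) : e n ∈ F (n + 1) := Finset.mem_insert_self _ _
  have hy_mem (n : ℕ) : y (F n) ∈ F (n + 1) :=
    Finset.mem_insert_of_mem (Finset.mem_insert_self _ _)
  refine ⟨fun n => k (F n), fun n => y (F n), fun n => hk _, fun x => ?_,
    fun m n hmn => hfix _ _ (hF hmn (hy_mem m)), fun n => hy _⟩
  obtain ⟨n, rfl⟩ := he x
  filter_upwards [eventually_ge_atTop (n + 1)] with m hm
  exact hfix _ _ (hF hm (he_mem n))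

/-- The composite `k 0 ∘ k 1 ∘ ⋯ ∘ k (n - 1)` of the first `n` terms: the map with the largest
index is applied first, so that ranges shrink as `n` grows. -/
def partialComp (k : ℕ → U → U) : ℕ → U → U
  | 0 => id
  | n + 1 => partialComp k n ∘ k n

/-- The infinite composite `k 0 ∘ k 1 ∘ ⋯`, from which the copies are built. It is meaningful
at the points `x` fixed by almost all `k n`, where it is the eventual value of the partial
composites; elsewhere it takes the junk value `x`, because `sInf ∅ = 0`. -/
noncomputable def infiniteComp (k : ℕ → U → U) (x : U) : U :=
  partialComp k (sInf {N | ∀ n ≥ N, k n x = x}) x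

section InfiniteComp

variable {k k' : ℕ → U → U}

theorem partialComp_congr {n : ℕ} (h : ∀ i < n, k i = k' i) :
    partialComp k n = partialComp k' n := by
  induction n with
  | zero => rfl
  | succ n ih =>
    rw [partialComp, partialComp, ih fun i hi => h i (hi.trans n.lt_succ_self),
      h n n.lt_succ_self]

theorem partialComp_injective (hk : ∀ n, Injective (k n)) (n : ℕ) :
    Injective (partialComp k n) := by
  induction n with
  | zero => exact injective_id
  | succ n ih => exact ih.comp (hk n)

protected theorem IsAdherent.partialComp {G : Subgroup (Equiv.Perm U)}
    (hk : ∀ n, IsAdherent G (k n)) (n : ℕ) : IsAdherent G (partialComp k n) := by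
  induction n with
  | zero => exact .id
  | succ n ih => exact ih.comp (hk n)

theorem range_partialComp_antitone : Antitone fun n => range (partialComp k n) :=
  antitone_nat_of_succ_le fun _ => range_comp_subset_range _ _

theorem partialComp_eq_of_le {m n : ℕ} (hmn : m ≤ n) {x : U} (hx : ∀ i ≥ m, k i x = x) :
    partialComp k n x = partialComp k m x := by
  induction n, hmn using Nat.le_induction with
  | base => rfl
  | succ n hmn ih => rw [partialComp, comp_apply, hx n hmn, ih]

theorem infiniteComp_eq_partialComp {n : ℕ} {x : U} (hx : ∀ i ≥ n, k i x = x) :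
    infiniteComp k x = partialComp k n x := by
  have hn : n ∈ {N | ∀ i ≥ N, k i x = x} := hx
  exact (partialComp_eq_of_le (Nat.sInf_le hn) (Nat.sInf_mem ⟨n, hn⟩)).symm

theorem eventually_infiniteComp_eq_partialComp {x : U} (hx : ∀ᶠ n in atTop, k n x = x) :
    ∀ᶠ n in atTop, infiniteComp k x = partialComp k n x := by
  obtain ⟨N, hN⟩ := eventually_atTop.mp hx
  filter_upwards [eventually_ge_atTop N] with n hn
  exact infiniteComp_eq_partialComp fun i hi => hN i (hn.trans hi)

protected theorem IsAdherent.infiniteComp {G : Subgroup (Equiv.Perm U)}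
    (hk : ∀ n, IsAdherent G (k n)) (hfix : ∀ x, ∀ᶠ n in atTop, k n x = x) :
    IsAdherent G (infiniteComp k) :=
  of_eventually_eq (IsAdherent.partialComp hk) fun x =>
    eventually_infiniteComp_eq_partialComp (hfix x)

theorem range_infiniteComp_subset (hfix : ∀ x, ∀ᶠ n in atTop, k n x = x) (n : ℕ) :
    range (infiniteComp k) ⊆ range (partialComp k n) := by
  rintro _ ⟨x, rfl⟩
  obtain ⟨m, hm, hnm⟩ :=
    ((eventually_infiniteComp_eq_partialComp (hfix x)).and (eventually_ge_atTop n)).exists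
  rw [hm]
  exact range_partialComp_antitone hnm (mem_range_self x)

end InfiniteComp

open Classical in
/-- The sequence `k` with `k n` replaced by the identity for `n ∉ S`, so that its composites are
those of the subsequence of `k` indexed by `S`. -/
noncomputable def restrictSeq (k : ℕ → U → U) (S : Set ℕ) (n : ℕ) : U → U :=
  if n ∈ S then k n else id

section RestrictSeq

variable {k : ℕ → U → U} {S T : Set ℕ} {n : ℕ}

theorem restrictSeq_of_mem (hn : n ∈ S) : restrictSeq k S n = k n :=
  if_pos hn

theorem restrictSeq_of_notMem (hn : n ∉ S) : restrictSeq k S n = id :=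
  if_neg hn

theorem restrictSeq_congr (h : n ∈ S ↔ n ∈ T) : restrictSeq k S n = restrictSeq k T n := by
  classical exact if_congr h rfl rfl

theorem restrictSeq_induction {p : (U → U) → Prop} (hk : p (k n)) (hid : p id) :
    p (restrictSeq k S n) := by
  unfold restrictSeq
  split_ifs
  exacts [hk, hid]

theorem eventually_restrictSeq_eq_self {x : U} (hx : ∀ᶠ n in atTop, k n x = x) :
    ∀ᶠ n in atTop, restrictSeq k S n x = x :=
  hx.mono fun _ hn => restrictSeq_induction (p := fun f => f x = x) hn rfl

variable {y : ℕ → U}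

theorem mem_iff_partialComp_notMem_range_infiniteComp (hinj : ∀ n, Injective (k n))
    (hfix : ∀ x, ∀ᶠ n in atTop, k n x = x) (hy_fix : ∀ m n, m < n → k n (y m) = y m)
    (hy : ∀ n, y n ∉ range (k n)) :
    n ∈ S ↔ partialComp (restrictSeq k S) n (y n) ∉ range (infiniteComp (restrictSeq k S)) := by
  constructor
  · intro hn hmem
    obtain ⟨z, hz⟩ :=
      range_infiniteComp_subset (fun x => eventually_restrictSeq_eq_self (hfix x)) (n + 1) hmem
    rw [partialComp, restrictSeq_of_mem hn] at hz
    have hP : Injective (partialComp (restrictSeq k S) n) :=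
      partialComp_injective (fun i => restrictSeq_induction (hinj i) injective_id) n
    exact hy n ⟨z, hP hz⟩
  · contrapose!
    intro hn
    refine ⟨y n, infiniteComp_eq_partialComp fun i hi => ?_⟩
    rcases hi.eq_or_lt with rfl | hni
    · rw [restrictSeq_of_notMem hn, id]
    · exact restrictSeq_induction (p := fun f => f (y n) = y n) (hy_fix n i hni) rfl

theorem range_infiniteComp_restrictSeq_injective (hinj : ∀ n, Injective (k n))
    (hfix : ∀ x, ∀ᶠ n in atTop, k n x = x) (hy_fix : ∀ m n, m < n → k n (y m) = y m)
    (hy : ∀ n, y n ∉ range (k n)) :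
    Injective fun S : Set ℕ => range (infiniteComp (restrictSeq k S)) := by
  intro S T (hST : range _ = range _)
  ext n
  induction n using Nat.strong_induction_on with
  | h n ih =>
    have hP : partialComp (restrictSeq k S) n = partialComp (restrictSeq k T) n :=
      partialComp_congr fun i hi => restrictSeq_congr (ih i hi)
    rw [mem_iff_partialComp_notMem_range_infiniteComp hinj hfix hy_fix hy,
      mem_iff_partialComp_notMem_range_infiniteComp hinj hfix hy_fix hy, hP, hST]

end RestrictSeq

section Cardinality

variable {G : Subgroup (Equiv.Perm U)}

theorem mk_copies_eq_one_of_forall_surjective (hG : ∀ f, IsAdherent G f → Surjective f) :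
    #{C : Set U // IsCopy G C} = 1 := by
  have isCopy_iff (C : Set U) : IsCopy G C ↔ C = Set.univ := by
    constructor
    · rintro ⟨f, hf, rfl⟩
      exact (hG f hf).range_eq
    · rintro rfl
      exact ⟨id, .id, range_id⟩
  simp only [isCopy_iff, mk_fintype, Fintype.card_unique, Nat.cast_one]

theorem mk_copies_eq_continuum_of_not_surjective [Countable U] {f : U → U}
    (hf : IsAdherent G f) (hns : ¬ Surjective f) : #{C : Set U // IsCopy G C} = continuum := by
  apply le_antisymm
  · calc #{C : Set U // IsCopy G C} ≤ #(Set U) := mk_subtype_le _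
      _ = 2 ^ #U := mk_set
      _ ≤ 2 ^ ℵ₀ := power_le_power_left two_ne_zero mk_le_aleph0
      _ = continuum := two_power_aleph0
  · obtain ⟨k, y, hk, hfix, hy_fix, hy⟩ := hf.exists_seq_fixing_notMem_range hns
    have isCopy (S : Set ℕ) : IsCopy G (range (infiniteComp (restrictSeq k S))) :=
      ⟨_, .infiniteComp (fun n => restrictSeq_induction (hk n) .id)
        fun x => eventually_restrictSeq_eq_self (hfix x), rfl⟩
    have copy_injective : Injective fun S => (⟨_, isCopy S⟩ : {C : Set U // IsCopy G C}) :=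
      fun _ _ hST => range_infiniteComp_restrictSeq_injective (fun n => (hk n).injective)
        hfix hy_fix hy (congrArg Subtype.val hST)
    simpa using lift_mk_le_lift_mk_of_injective copy_injective

end Cardinality

end

/-- Theorem: the set of copies for `G` has cardinality `1` or the continuum. -/
theorem card_copies_one_or_continuum {U : Type*} [Countable U] [Infinite U]
    (G : Subgroup (Equiv.Perm U)) :
    Cardinal.mk {C : Set U // IsCopy G C} = 1 ∨
      Cardinal.mk {C : Set U // IsCopy G C} = Cardinal.continuum := by
  by_cases hG : ∀ f, IsAdherent G f → Surjective f
  · exact .inl (mk_copies_eq_one_of_forall_surjective hG)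
  · push Not at hG
    obtain ⟨f, hf, hns⟩ := hG
    exact .inr (mk_copies_eq_continuum_of_not_surjective hf hns)
end

section
/- If G is oligomorphic then there exists an order embedding of the power set of ℕ ordered by inclusion into the set cl(G)[U] of copies for G ordered by inclusion. -/
/-- `G` is oligomorphic: for every `n ≥ 1` the coordinatewise action of `G`
on `U^n` has finitely many orbits. -/
def Oligomorphic {U : Type*} (G : Subgroup (Equiv.Perm U)) : Prop :=
  ∀ n : ℕ, 0 < n →
    {O : Set (Fin n → U) |
      ∃ x : Fin n → U, O = {y | ∃ g ∈ G, ∀ i, g (x i) = y i}}.Finite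

/-! Choose countably many Skolem functions for `G`, one for each tuple `a` and point `x` of `U`,
computing from a tuple `b` in the orbit of `a` a point `y` with `(b, y)` in the orbit of `(a, x)`.
They act pointwise on the functions `(ℕ → U) → U`, and the hull of the coordinates with index in `A`
consists of functions depending only on the coordinates in `A`. By a counting argument some
ultrafilter `W` on `ℕ → U` separates each coordinate from all functions not depending on it, so
modulo `W` the hull of `A` contains a coordinate only if its index lies in `A`. A back-and-forth
argument identifies `U` with the hull of any `A`, modulo `W`: the Skolem functions give the step
from `U` to the hull, and oligomorphy gives the step back. Transporting the hulls of all `A` along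
the identification of `U` with the hull of `ℕ` gives the required copies. -/

open Filter FirstOrder Function MulAction

theorem exists_total_relation_of_back_and_forth {α β : Type*} [Countable α] [Countable β]
    [DecidableEq α] [DecidableEq β] {P : Finset (α × β) → Prop} (anti : Antitone P) (empty : P ∅)
    (forth : ∀ s, P s → ∀ a, ∃ b, P (insert (a, b) s))
    (back : ∀ s, P s → ∀ b, ∃ a, P (insert (a, b) s)) :
    ∃ R : Set (α × β), (∀ F : Finset (α × β), ↑F ⊆ R → P F) ∧
      (∀ a, ∃ b, (a, b) ∈ R) ∧ ∀ b, ∃ a, (a, b) ∈ R := by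
  have : Encodable (α ⊕ β) := Encodable.ofCountable _
  let meets : α ⊕ β → Order.Cofinal {s // P s} := Sum.elim
    (fun a ↦
      { carrier := {s | ∃ b, (a, b) ∈ s.1}
        isCofinal := fun s ↦
          have ⟨b, hb⟩ := forth s.1 s.2 a
          ⟨⟨_, hb⟩, ⟨b, Finset.mem_insert_self _ _⟩, Finset.subset_insert _ _⟩ })
    (fun b ↦
      { carrier := {s | ∃ a, (a, b) ∈ s.1}
        isCofinal := fun s ↦
          have ⟨a, ha⟩ := back s.1 s.2 b
          ⟨⟨_, ha⟩, ⟨a, Finset.mem_insert_self _ _⟩, Finset.subset_insert _ _⟩ })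
  let I := Order.idealOfCofinals ⟨∅, empty⟩ meets
  have meets_I (i) : ∃ s, s ∈ meets i ∧ s ∈ I := Order.cofinal_meets_idealOfCofinals _ meets i
  refine ⟨{p | ∃ s ∈ I, p ∈ s.1}, fun F hF ↦ ?_, fun a ↦ ?_, fun b ↦ ?_⟩
  · suffices ∃ s ∈ I, F ⊆ s.1 from let ⟨s, _, hFs⟩ := this; anti hFs s.2
    induction F using Finset.induction_on with
    | empty => exact ⟨_, Order.mem_idealOfCofinals _ meets, Finset.empty_subset _⟩
    | insert p F _ ih =>
      rw [Finset.coe_insert, Set.insert_subset_iff] at hF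
      obtain ⟨⟨s, hs, hps⟩, t, ht, hFt⟩ := hF.1, ih hF.2
      obtain ⟨u, hu, hsu, htu⟩ := I.directed s hs t ht
      exact ⟨u, hu, Finset.insert_subset (hsu hps) (hFt.trans htu)⟩
  · obtain ⟨s, ⟨b, hb⟩, hs⟩ := meets_I (.inl a)
    exact ⟨b, s, hs, hb⟩
  · obtain ⟨s, ⟨a, ha⟩, hs⟩ := meets_I (.inr b)
    exact ⟨a, s, hs, ha⟩

section Generic

variable {ι U : Type*}

/-- A filter on `ι → U` is generic if each coordinate differs, almost everywhere, from every
function not depending on it: the coordinates behave like independent non-atomic variables. -/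
def IsGeneric (l : Filter (ι → U)) : Prop :=
  ∀ (i : ι) (t : (ι → U) → U), DependsOn t {i}ᶜ → ∀ᶠ w in l, t w ≠ w i

theorem exists_finset_update_mem [DecidableEq ι] {M : Finset U} (hM : M.Nonempty) (N : Finset ι) :
    ∃ P : Finset (ι → U), P.Nonempty ∧ ∀ w ∈ P, ∀ i ∈ N, ∀ u ∈ M, update w i u ∈ P := by
  classical
  induction N using Finset.induction_on with
  | empty => exact ⟨{fun _ ↦ hM.choose}, by simp, by simp⟩
  | insert i N _ ih =>
    obtain ⟨P, hP, hPN⟩ := ih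
    refine ⟨Finset.image₂ (fun w u ↦ update w i u) P M, hP.image₂ hM, ?_⟩
    rintro _ hw' j hj v hv
    obtain ⟨w, hw, u, hu, rfl⟩ := Finset.mem_image₂.1 hw'
    rw [Finset.mem_image₂]
    obtain rfl | hji := eq_or_ne j i
    · exact ⟨w, hw, v, hv, (update_idem _ _ _).symm⟩
    · have hjN : j ∈ N := (Finset.mem_insert.1 hj).resolve_left hji
      exact ⟨update w j v, hPN w hw j hjN v hv, u, hu, update_comm hji _ _ _⟩

theorem card_filter_apply_eq_mul_card_le [DecidableEq ι] [DecidableEq U] {t : (ι → U) → U} {i : ι}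
    (ht : DependsOn t {i}ᶜ) {P : Finset (ι → U)} {M : Finset U}
    (hP : ∀ w ∈ P, ∀ u ∈ M, update w i u ∈ P) :
    (P.filter fun w ↦ t w = w i).card * M.card ≤ P.card := by
  have ht_update (w u) : t (update w i u) = t w := ht fun _ hj ↦ update_of_ne hj _ _
  rw [← Finset.card_product]
  -- From `update w i u` one reads off `u`, and then recovers `w i` as `t (update w i u)`.
  refine Finset.card_le_card_of_injOn (fun q ↦ update q.1 i q.2) ?_ ?_
  · rintro ⟨w, u⟩ hq
    simp only [Finset.coe_product, Set.mem_prod, Finset.mem_coe, Finset.mem_filter] at hq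
    exact hP w hq.1.1 u hq.2
  · rintro ⟨w, u⟩ hq ⟨w', u'⟩ hq' (heq : update w i u = update w' i u')
    simp only [Finset.coe_product, Set.mem_prod, Finset.mem_coe, Finset.mem_filter] at hq hq'
    have hu : u = u' := by simpa using congrFun heq i
    have hi : w i = w' i := by
      rw [← hq.1.2, ← hq'.1.2, ← ht_update w u, heq, ht_update]
    have hw : w = w' := by
      rw [← update_eq_self i w, ← update_idem u (w i) w, heq, update_idem, hi, update_eq_self]
    rw [hu, hw]

theorem exists_forall_apply_ne [Infinite U] (L : Finset (ι × ((ι → U) → U)))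
    (hL : ∀ p ∈ L, DependsOn p.2 {p.1}ᶜ) : ∃ w : ι → U, ∀ p ∈ L, p.2 w ≠ w p.1 := by
  classical
  obtain ⟨M, hM⟩ := Infinite.exists_subset_card_eq U (L.card + 1)
  have hM_nonempty : M.Nonempty := Finset.card_pos.1 (by omega)
  obtain ⟨P, hP, hPM⟩ := exists_finset_update_mem hM_nonempty (L.image Prod.fst)
  by_contra! hbad
  have hcover : P ⊆ L.biUnion fun p ↦ P.filter fun w ↦ p.2 w = w p.1 := fun w hw ↦ by
    obtain ⟨p, hp, hpw⟩ := hbad w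
    exact Finset.mem_biUnion.2 ⟨p, hp, Finset.mem_filter.2 ⟨hw, hpw⟩⟩
  -- Each condition fails on at most a fraction `1 / #M < 1 / #L` of `P`.
  have : P.card * M.card ≤ L.card * P.card := calc
    P.card * M.card ≤ (∑ p ∈ L, (P.filter fun w ↦ p.2 w = w p.1).card) * M.card :=
      Nat.mul_le_mul_right _ ((Finset.card_le_card hcover).trans Finset.card_biUnion_le)
    _ = ∑ p ∈ L, (P.filter fun w ↦ p.2 w = w p.1).card * M.card := Finset.sum_mul _ _ _
    _ ≤ ∑ _p ∈ L, P.card := Finset.sum_le_sum fun p hp ↦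
      card_filter_apply_eq_mul_card_le (hL p hp) fun w hw ↦
        hPM w hw p.1 (Finset.mem_image_of_mem _ hp)
    _ = L.card * P.card := Finset.sum_const_nat fun _ _ ↦ rfl
  rw [hM] at this
  nlinarith [hP.card_pos]

variable (ι U) in
theorem exists_isGeneric_ultrafilter [Infinite U] :
    ∃ W : Ultrafilter (ι → U), IsGeneric (W : Filter (ι → U)) := by
  classical
  let condition (p : ι × ((ι → U) → U)) : Set (ι → U) := {w | p.2 w ≠ w p.1}
  obtain ⟨W, hW⟩ := Ultrafilter.exists_ultrafilter_of_finite_inter_nonempty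
    (condition '' {p | DependsOn p.2 {p.1}ᶜ}) fun T hT ↦ by
      obtain ⟨L, hL, rfl⟩ := Finset.subset_set_image_iff.1 hT
      obtain ⟨w, hw⟩ := exists_forall_apply_ne L fun p hp ↦ hL hp
      exact ⟨w, by simpa [condition] using hw⟩
  exact ⟨W, fun i t ht ↦ hW ⟨(i, t), ht, rfl⟩⟩

end Generic

section SkolemHull

variable {U : Type*} (G : Subgroup (Equiv.Perm U))

open Classical in
/-- A Skolem function for `G`: if `b` lies in the orbit of `a`, it returns a point `y` such that
`(b, y)` lies in the orbit of `(a, x)`; otherwise it returns the junk value `x`. -/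
noncomputable def skolemFun {n : ℕ} (a : Fin n → U) (x : U) (b : Fin n → U) : U :=
  if h : ∃ g ∈ G, ∀ i, g (a i) = b i then h.choose x else x

theorem exists_mem_apply_eq_skolemFun {n : ℕ} {a b : Fin n → U} (x : U)
    (h : ∃ g ∈ G, ∀ i, g (a i) = b i) :
    ∃ g ∈ G, (∀ i, g (a i) = b i) ∧ g x = skolemFun G a x b :=
  ⟨h.choose, h.choose_spec.1, h.choose_spec.2, by rw [skolemFun, dif_pos h]⟩

/-- The language with one function symbol for each Skolem function of `G`. It depends on `G` only
so that the structure on `Ω → U` below can be an instance. -/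
def skolemLanguage (_ : Subgroup (Equiv.Perm U)) : FirstOrder.Language where
  Functions n := (Fin n → U) × U
  Relations _ := Empty

/-- The Skolem functions of `G` act pointwise on the functions `Ω → U`. -/
noncomputable instance skolemStructure (Ω : Type*) : (skolemLanguage G).Structure (Ω → U) where
  funMap f e ω := skolemFun G f.1 f.2 fun i ↦ e i ω
  RelMap r := r.elim

/-- The closure of the coordinate functions with index in `A` under the Skolem functions of `G`. -/
noncomputable def skolemHull {ι : Type*} (A : Set ι) :
    (skolemLanguage G).Substructure ((ι → U) → U) :=
  Language.Substructure.closure _ (eval '' A)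

variable {G} {ι : Type*} {A B : Set ι}

theorem eval_mem_skolemHull {i : ι} (hi : i ∈ A) : eval i ∈ skolemHull (U := U) G A :=
  Language.Substructure.subset_closure ⟨i, hi, rfl⟩

theorem skolemHull_mono (h : A ⊆ B) : skolemHull G A ≤ skolemHull G B :=
  Language.Substructure.closure_mono (Set.image_mono h)

instance countable_skolemHull [Countable U] [Countable ι] (A : Set ι) :
    Countable (skolemHull G A) := by
  have : Countable (Σ n, (skolemLanguage G).Functions n) :=
    inferInstanceAs (Countable (Σ n, (Fin n → U) × U))
  exact Language.Substructure.cg_iff_countable.1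
    (Language.Substructure.cg_closure (A.to_countable.image _))

theorem dependsOn_of_mem_skolemHull {t : (ι → U) → U} (ht : t ∈ skolemHull G A) :
    DependsOn t A := by
  refine Language.Substructure.closure_induction (p := (DependsOn · A)) ht ?_
    fun f e he w w' h ↦ congrArg (skolemFun G f.1 f.2) (funext fun k ↦ he k h)
  rintro _ ⟨i, hi, rfl⟩ w w' h
  exact h i hi

/-- The image of the Skolem hull of `A` in the reduced power of `U` modulo `l`. -/
def skolemGerms (G : Subgroup (Equiv.Perm U)) (l : Filter (ι → U)) (A : Set ι) : Set (l.Germ U) :=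
  Germ.ofFun '' (skolemHull G A : Set ((ι → U) → U))

theorem skolemGerms_subset_iff {l : Filter (ι → U)} [l.NeBot] (hl : IsGeneric l) :
    skolemGerms G l A ⊆ skolemGerms G l B ↔ A ⊆ B := by
  refine ⟨fun h i hi ↦ ?_, fun h ↦ Set.image_mono (skolemHull_mono h)⟩
  obtain ⟨t, ht, hti⟩ := h ⟨_, eval_mem_skolemHull hi, rfl⟩
  by_contra hiB
  have ht_indep : DependsOn t {i}ᶜ :=
    (dependsOn_of_mem_skolemHull ht).mono (Set.subset_compl_singleton_iff.2 hiB)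
  obtain ⟨w, hne, heq⟩ := ((hl i t ht_indep).and (Germ.coe_eq.1 hti)).exists
  exact hne heq

end SkolemHull

section AdherentAlong

variable {U Ω : Type*} {G : Subgroup (Equiv.Perm U)}

/-- A family of functions on `U` is adherent to `G` along `l` if on each finite set it agrees with
elements of `G`, almost everywhere: this is adherence for a map from `U` to its reduced power. -/
def IsAdherentAlong (G : Subgroup (Equiv.Perm U)) (l : Filter Ω) (φ : U → Ω → U) : Prop :=
  ∀ F : Finset U, ∀ᶠ ω in l, ∃ g ∈ G, ∀ x ∈ F, φ x ω = g x

theorem IsAdherentAlong.germ_injective {l : Filter Ω} [l.NeBot] {φ : U → Ω → U}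
    (hφ : IsAdherentAlong G l φ) : Injective fun x ↦ (φ x : l.Germ U) := by
  classical
  intro x y hxy
  obtain ⟨ω, heq, g, -, hg⟩ := ((Germ.coe_eq.1 hxy).and (hφ {x, y})).exists
  exact g.injective (by rw [← hg x (by simp), ← hg y (by simp), heq])

theorem IsAdherentAlong.isAdherent_of_eventuallyEq_comp {l : Filter Ω} [l.NeBot]
    {φ ψ : U → Ω → U} (hφ : IsAdherentAlong G l φ) (hψ : IsAdherentAlong G l ψ) {k : U → U}
    (hk : ∀ x, φ (k x) =ᶠ[l] ψ x) : IsAdherent G k := by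
  classical
  intro F
  have hkF : ∀ᶠ ω in l, ∀ x ∈ F, φ (k x) ω = ψ x ω := (eventually_all_finset F).2 fun x _ ↦ hk x
  obtain ⟨ω, hkω, ⟨g, hg, hφg⟩, g', hg', hψg'⟩ :=
    (hkF.and ((hφ (F.image k)).and (hψ F))).exists
  refine ⟨g⁻¹ * g', G.mul_mem (G.inv_mem hg) hg', fun x hx ↦ ?_⟩
  rw [Equiv.Perm.mul_apply, Equiv.Perm.eq_inv_iff_eq, ← hφg _ (Finset.mem_image_of_mem k hx),
    hkω x hx, hψg' x hx]

theorem IsAdherentAlong.isCopy_preimage_range {l : Filter Ω} [l.NeBot] {φ ψ : U → Ω → U}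
    (hφ : IsAdherentAlong G l φ) (hψ : IsAdherentAlong G l ψ)
    (h : Set.range (fun x ↦ (ψ x : l.Germ U)) ⊆ Set.range fun x ↦ (φ x : l.Germ U)) :
    IsCopy G ((fun x ↦ (φ x : l.Germ U)) ⁻¹' Set.range fun x ↦ (ψ x : l.Germ U)) := by
  choose k hk using Set.range_subset_iff.1 h
  refine ⟨k, hφ.isAdherent_of_eventuallyEq_comp hψ fun x ↦ Germ.coe_eq.1 (hk x), ?_⟩
  rw [← funext hk, Set.range_comp' (fun x ↦ (φ x : l.Germ U)) k,
    Set.preimage_image_eq _ hφ.germ_injective]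

end AdherentAlong

section PartialIso

variable {U Ω : Type*} {G : Subgroup (Equiv.Perm U)}

theorem Oligomorphic.finite_range_orbit (h : Oligomorphic G) (n : ℕ) :
    (Set.range (orbit G : (Fin n → U) → Set (Fin n → U))).Finite := by
  obtain rfl | hn := n.eq_zero_or_pos
  · exact Set.toFinite _
  · convert h n hn using 1
    ext O
    refine exists_congr fun x ↦ ?_
    have horbit : orbit G x = {y | ∃ g ∈ G, ∀ i, g (x i) = y i} := by
      ext y
      simp [mem_orbit_iff, funext_iff, Subgroup.smul_def]
    rw [horbit, eq_comm]

theorem Oligomorphic.eventually_eventually_exists_apply_eq (h : Oligomorphic G)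
    (W : Ultrafilter Ω) (E : Finset (Ω → U)) :
    ∀ᶠ ω in W, ∀ᶠ ω' in W, ∃ g ∈ G, ∀ e ∈ E, g (e ω) = e ω' := by
  let tuple (ω : Ω) : Fin E.card → U := fun i ↦ (E.equivFin.symm i).1 ω
  obtain ⟨O, -, hO⟩ : ∃ O ∈ Set.range (orbit G), ∀ᶠ ω in W, orbit G (tuple ω) = O :=
    (W.eventually_exists_mem_iff (h.finite_range_orbit E.card)).1
      (.of_forall fun ω ↦ ⟨_, Set.mem_range_self (tuple ω), rfl⟩)
  filter_upwards [hO] with ω hω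
  filter_upwards [hO] with ω' hω'
  obtain ⟨g, hg⟩ : tuple ω' ∈ orbit G (tuple ω) := orbit_eq_iff.1 (hω'.trans hω.symm)
  refine ⟨g, g.2, fun e he ↦ ?_⟩
  simpa [tuple, Subgroup.smul_def] using congrFun hg (E.equivFin ⟨e, he⟩)

/-- A finite set of pairs is a partial isomorphism from `U` to the germs of the elements of `D`
modulo `l` if some element of `G`, depending on the point `ω`, carries the first entries to the
values at `ω` of the second entries, almost everywhere. -/
def IsPartialIso (G : Subgroup (Equiv.Perm U)) (l : Filter Ω) {D : Set (Ω → U)}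
    (s : Finset (U × D)) : Prop :=
  ∀ᶠ ω in l, ∃ g ∈ G, ∀ p ∈ s, p.2.1 ω = g p.1

theorem IsPartialIso.antitone (l : Filter Ω) (D : Set (Ω → U)) :
    Antitone (IsPartialIso G l (D := D)) :=
  fun _ _ hst ht ↦ ht.mono fun _ ⟨g, hg, hgt⟩ ↦ ⟨g, hg, fun p hp ↦ hgt p (hst hp)⟩

theorem IsPartialIso.exists_insert_left [DecidableEq U] {l : Filter Ω}
    {D : (skolemLanguage G).Substructure (Ω → U)} [DecidableEq (D : Set (Ω → U))]
    {s : Finset (U × (D : Set (Ω → U)))} (hs : IsPartialIso G l s) (x : U) :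
    ∃ e, IsPartialIso G l (insert (x, e) s) := by
  let pair := s.equivFin.symm
  let symbol : (skolemLanguage G).Functions s.card := (fun i ↦ (pair i).1.1, x)
  let e := Language.Structure.funMap symbol fun i ↦ (pair i).1.2.1
  refine ⟨⟨e, D.fun_mem symbol _ fun i ↦ (pair i).1.2.2⟩, hs.mono fun ω ⟨g, hg, hgs⟩ ↦ ?_⟩
  obtain ⟨g', hg', hg's, hg'x⟩ := exists_mem_apply_eq_skolemFun G x
    ⟨g, hg, fun i ↦ (hgs _ (pair i).2).symm⟩
  refine ⟨g', hg', Finset.forall_mem_insert _ _ _ |>.2 ⟨hg'x.symm, fun p hp ↦ ?_⟩⟩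
  simpa [pair] using (hg's (s.equivFin ⟨p, hp⟩)).symm

theorem IsPartialIso.exists_insert_right [DecidableEq U] (h : Oligomorphic G)
    {W : Ultrafilter Ω} {D : Set (Ω → U)} [DecidableEq D] {s : Finset (U × D)}
    (hs : IsPartialIso G (W : Filter Ω) s) (e : D) :
    ∃ x, IsPartialIso G (W : Filter Ω) (insert (x, e) s) := by
  classical
  obtain ⟨ω₀, ⟨g₀, hg₀, hg₀s⟩, hω₀⟩ := (hs.and (h.eventually_eventually_exists_apply_eq W
    (insert e.1 (s.image fun p ↦ p.2.1)))).exists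
  refine ⟨g₀⁻¹ (e.1 ω₀), hω₀.mono fun ω ⟨g, hg, hge⟩ ↦ ?_⟩
  rw [Finset.forall_mem_insert, Finset.forall_mem_image] at hge
  refine ⟨g * g₀, G.mul_mem hg hg₀, Finset.forall_mem_insert _ _ _ |>.2 ⟨?_, fun p hp ↦ ?_⟩⟩
  · simp [hge.1]
  · rw [Equiv.Perm.mul_apply, ← hg₀s p hp, hge.2 hp]

theorem Oligomorphic.exists_isAdherentAlong_range_eq [Countable U] (h : Oligomorphic G)
    (W : Ultrafilter Ω) (D : (skolemLanguage G).Substructure (Ω → U)) [Countable D] :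
    ∃ φ : U → Ω → U, IsAdherentAlong G (W : Filter Ω) φ ∧
      Set.range (fun x ↦ (φ x : (W : Filter Ω).Germ U)) = Germ.ofFun '' (D : Set (Ω → U)) := by
  classical
  obtain ⟨R, hR, hR_left, hR_right⟩ := exists_total_relation_of_back_and_forth
    (IsPartialIso.antitone W (D : Set (Ω → U))) (.of_forall fun _ ↦ ⟨1, G.one_mem, by simp⟩)
    (fun s hs ↦ hs.exists_insert_left) (fun s hs ↦ hs.exists_insert_right h)
  choose φ hφ using hR_left
  refine ⟨fun x ↦ φ x, fun F ↦ ?_, Set.Subset.antisymm ?_ ?_⟩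
  · have := hR (F.image fun x ↦ (x, φ x)) (by simpa [Set.subset_def] using fun x _ ↦ hφ x)
    simpa only [IsPartialIso, Finset.forall_mem_image] using this
  · rintro _ ⟨x, rfl⟩
    exact ⟨φ x, (φ x).2, rfl⟩
  · rintro _ ⟨e, he, rfl⟩
    obtain ⟨x, hx⟩ := hR_right ⟨e, he⟩
    refine ⟨x, Germ.coe_eq.2 ((hR {(x, φ x), (x, ⟨e, he⟩)} ?_).mono fun ω ⟨g, _, hg⟩ ↦ ?_)⟩
    · simp [Set.insert_subset_iff, hφ, hx]
    · simp only [Finset.forall_mem_insert, Finset.mem_singleton, forall_eq] at hg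
      exact hg.1.trans hg.2.symm

end PartialIso

/-- Theorem: if `G` is oligomorphic then the powerset of `ℕ`, ordered by inclusion,
order-embeds into the poset of copies for `G`, ordered by inclusion. -/
theorem powerset_embeds_of_oligomorphic {U : Type*} [Countable U] [Infinite U]
    (G : Subgroup (Equiv.Perm U)) (h : Oligomorphic G) :
    Nonempty (Set ℕ ↪o {C : Set U // IsCopy G C}) := by
  obtain ⟨W, hW⟩ := exists_isGeneric_ultrafilter ℕ U
  have embed (A : Set ℕ) : ∃ φ : U → (ℕ → U) → U, IsAdherentAlong G (W : Filter (ℕ → U)) φ ∧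
      Set.range (fun x ↦ (φ x : (W : Filter (ℕ → U)).Germ U)) = skolemGerms G W A :=
    h.exists_isAdherentAlong_range_eq W (skolemHull G A)
  obtain ⟨φ, hφ, hφ_range⟩ := embed Set.univ
  have subset_range (A : Set ℕ) :
      skolemGerms G W A ⊆ Set.range fun x ↦ (φ x : (W : Filter (ℕ → U)).Germ U) :=
    hφ_range ▸ (skolemGerms_subset_iff hW).2 A.subset_univ
  let copy (A : Set ℕ) : Set U :=
    (fun x ↦ (φ x : (W : Filter (ℕ → U)).Germ U)) ⁻¹' skolemGerms G W A
  have isCopy_copy (A : Set ℕ) : IsCopy G (copy A) := by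
    obtain ⟨ψ, hψ, hψ_range⟩ := embed A
    simpa only [hψ_range] using hφ.isCopy_preimage_range hψ (hψ_range ▸ subset_range A)
  exact ⟨OrderEmbedding.ofMapLEIff (fun A ↦ ⟨copy A, isCopy_copy A⟩) fun A B ↦
    (Set.preimage_subset_preimage_iff (subset_range A)).trans (skolemGerms_subset_iff hW)⟩
end

section
/- If G is algebraically finite then for every finite subset F of U there exist two copies C and D for G with C ∩ D = ac(F). -/
/-- The algebraic closure of `F`: the union of all finite orbits of the pointwise
stabilizer of `F`, i.e. the set of points whose orbit under that stabilizer is finite. -/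
def algCl {U : Type*} (G : Subgroup (Equiv.Perm U)) (F : Set U) : Set U :=
  {x | Set.Finite {y | ∃ g ∈ G, (∀ a ∈ F, g a = a) ∧ g x = y}}

/-- `G` is algebraically finite: the algebraic closure of every finite set is finite. -/
def AlgebraicallyFinite {U : Type*} (G : Subgroup (Equiv.Perm U)) : Prop :=
  ∀ F : Finset U, (algCl G ↑F).Finite

/-!
If `E` is finite and algebraically closed, the points outside `E` have infinite orbits under the
pointwise stabilizer of `E`, so by B. H. Neumann's covering lemma an element of that stabilizer
moves any finite set of them off any other finite set. Exhaust `U` by finite algebraically closed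
sets `A 0 ⊆ A 1 ⊆ ⋯` with `A 0 = algCl G F`, and start from `p 0 = q 0 = 1`. At each step precompose
`p n` and `q n` with elements fixing `A n` pointwise so that the images of the new points create no
new coincidences; then `p n '' A n ∩ q n '' A n = A 0` persists. The limits of `p` and `q` are
adherent functions whose ranges meet exactly in `A 0`.
-/

open Equiv MulAction Set Subgroup

section MulAction

variable {M α : Type*} [Group M] [MulAction M α]

theorem finite_orbit_iff_relIndex_stabilizer_ne_zero {H : Subgroup M} {x : α} :
    (orbit H x).Finite ↔ (stabilizer M x).relIndex H ≠ 0 := by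
  have hrel : (stabilizer M x).relIndex H = (orbit H x).ncard := index_stabilizer H x
  rw [hrel]
  exact ⟨fun h => ncard_ne_zero_of_mem (mem_orbit_self x) h, finite_of_ncard_ne_zero⟩

open Pointwise in
theorem exists_smul_notMem_of_infinite_orbits {X Y : Set α} (hX : X.Finite) (hY : Y.Finite)
    (horbit : ∀ x ∈ X, (orbit M x).Infinite) : ∃ g : M, ∀ x ∈ X, g • x ∉ Y := by
  by_contra! hmeet
  have htransport : ∀ i : α × α, i.2 ∈ orbit M i.1 → ∃ t : M, t • i.1 = i.2 := fun _ h => h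
  choose! t ht using htransport
  have hcover : ⋃ i ∈ (hX.prod hY).toFinset, t i • (stabilizer M i.1 : Set M) = univ := by
    refine eq_univ_of_forall fun g => ?_
    obtain ⟨x, hx, hgx⟩ := hmeet g
    refine mem_iUnion₂.mpr ⟨(x, g • x), by simp [hx, hgx], ?_⟩
    rw [mem_leftCoset_iff, SetLike.mem_coe, mem_stabilizer_iff, mul_smul, inv_smul_eq_iff]
    exact (ht (x, g • x) (mem_orbit x g)).symm
  obtain ⟨⟨x, y⟩, hxy, hindex⟩ := exists_finiteIndex_of_leftCoset_cover hcover
  have hx : x ∈ X := ((hX.prod hY).mem_toFinset.mp hxy).1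
  refine horbit x hx (finite_of_ncard_ne_zero ?_)
  rw [← index_stabilizer]
  exact hindex.index_ne_zero

end MulAction

section AlgebraicClosure

variable {U : Type*} {G : Subgroup (Perm U)} {E E' : Set U}

theorem mem_algCl_iff_finite_orbit {x : U} :
    x ∈ algCl G E ↔ (orbit (fixingSubgroup G E) x).Finite := by
  have horbit : {y | ∃ g ∈ G, (∀ a ∈ E, g a = a) ∧ g x = y} = orbit (fixingSubgroup G E) x := by
    ext y
    constructor
    · rintro ⟨g, hg, hgE, rfl⟩
      exact ⟨⟨⟨g, hg⟩, (mem_fixingSubgroup_iff G).mpr hgE⟩, rfl⟩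
    · rintro ⟨⟨g, hgE⟩, rfl⟩
      exact ⟨g, g.2, (mem_fixingSubgroup_iff G).mp hgE, rfl⟩
  rw [← horbit, algCl, mem_ofPred_eq]

theorem mem_algCl_iff_relIndex_ne_zero {x : U} :
    x ∈ algCl G E ↔ (stabilizer G x).relIndex (fixingSubgroup G E) ≠ 0 :=
  mem_algCl_iff_finite_orbit.trans finite_orbit_iff_relIndex_stabilizer_ne_zero

theorem subset_algCl : E ⊆ algCl G E := fun x hx =>
  (finite_singleton x).subset fun _ ⟨_, _, hgE, hgx⟩ => hgx.symm.trans (hgE x hx)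

theorem algCl_mono (h : E ⊆ E') : algCl G E ⊆ algCl G E' := fun _ hx =>
  hx.subset fun _ ⟨g, hg, hgE, hgx⟩ => ⟨g, hg, fun a ha => hgE a (h ha), hgx⟩

theorem relIndex_fixingSubgroup_ne_zero (hfin : E'.Finite) (hsub : E' ⊆ algCl G E) :
    (fixingSubgroup G E').relIndex (fixingSubgroup G E) ≠ 0 := by
  have : Finite E' := hfin
  have hiInf : fixingSubgroup G E' = ⨅ x : E', stabilizer G (x : U) := by
    ext g
    simp [mem_fixingSubgroup_iff, mem_iInf]
  rw [hiInf]
  exact relIndex_iInf_ne_zero fun x => mem_algCl_iff_relIndex_ne_zero.mp (hsub x.2)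

theorem algCl_subset_algCl (hfin : E'.Finite) (hsub : E' ⊆ algCl G E) :
    algCl G E' ⊆ algCl G E := fun x hx => by
  rw [mem_algCl_iff_relIndex_ne_zero] at hx ⊢
  exact relIndex_ne_zero_trans hx (relIndex_fixingSubgroup_ne_zero hfin hsub)

theorem AlgebraicallyFinite.finite_algCl (hG : AlgebraicallyFinite G) (hE : E.Finite) :
    (algCl G E).Finite := by
  simpa using hG hE.toFinset

theorem AlgebraicallyFinite.exists_exhaustion [Countable U] [Nonempty U]
    (hG : AlgebraicallyFinite G) (hE : E.Finite) :
    ∃ A : ℕ → Set U, A 0 = algCl G E ∧ Monotone A ∧ (∀ n, (A n).Finite) ∧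
      (∀ n, algCl G (A n) ⊆ A n) ∧ ⋃ n, A n = univ := by
  obtain ⟨e, he⟩ := exists_surjective_nat U
  have hfin (n : ℕ) : (algCl G (E ∪ e '' Iio n)).Finite :=
    hG.finite_algCl (hE.union ((finite_Iio n).image e))
  refine ⟨fun n => algCl G (E ∪ e '' Iio n), by simp, fun m n hmn => ?_, hfin,
    fun n => algCl_subset_algCl (hfin n) Subset.rfl, eq_univ_of_forall fun x => ?_⟩
  · exact algCl_mono (union_subset_union_right E (image_mono (Iio_subset_Iio hmn)))
  · obtain ⟨n, rfl⟩ := he x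
    have hn : e n ∈ E ∪ e '' Iio (n + 1) := .inr (mem_image_of_mem e n.lt_succ_self)
    exact mem_iUnion.mpr ⟨n + 1, subset_algCl hn⟩

end AlgebraicClosure

section Extension

variable {U : Type*} {G : Subgroup (Perm U)} {E E' Y : Set U}

theorem exists_eqOn_disjoint_image (hE : algCl G E ⊆ E) (hE' : E'.Finite) (hY : Y.Finite)
    (p : G) : ∃ p' : G, EqOn (p' : Perm U) (p : Perm U) E ∧
      Disjoint ((p' : Perm U) '' (E' \ E)) Y := by
  have horbit : ∀ x ∈ E' \ E, (orbit (fixingSubgroup G E) x).Infinite := fun x hx hfin =>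
    hx.2 (hE (mem_algCl_iff_finite_orbit.mpr hfin))
  obtain ⟨⟨h, hfix⟩, hmove⟩ := exists_smul_notMem_of_infinite_orbits (hE'.subset sdiff_subset)
    (hY.preimage (p : Perm U).injective.injOn) horbit
  rw [mem_fixingSubgroup_iff] at hfix
  refine ⟨p * h, fun x hx => congrArg (p : Perm U) (hfix x hx), ?_⟩
  rw [disjoint_image_left, disjoint_left]
  exact hmove

theorem exists_eqOn_image_inter_image_eq (hE : algCl G E ⊆ E) (hE' : E'.Finite) (hsub : E ⊆ E')
    (p q : G) : ∃ p' q' : G, EqOn (p' : Perm U) (p : Perm U) E ∧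
      EqOn (q' : Perm U) (q : Perm U) E ∧
      (p' : Perm U) '' E' ∩ (q' : Perm U) '' E' = (p : Perm U) '' E ∩ (q : Perm U) '' E := by
  obtain ⟨p', hp, hpdisj⟩ := exists_eqOn_disjoint_image hE hE'
    ((hE'.subset hsub).image (q : Perm U)) p
  obtain ⟨q', hq, hqdisj⟩ := exists_eqOn_disjoint_image hE hE' (hE'.image (p' : Perm U)) q
  have image_split (r : Perm U) : r '' E' = r '' E ∪ r '' (E' \ E) := by
    rw [← image_union, union_sdiff_cancel hsub]
  refine ⟨p', q', hp, hq, ?_⟩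
  calc (p' : Perm U) '' E' ∩ (q' : Perm U) '' E'
      = (p' : Perm U) '' E' ∩ (q : Perm U) '' E := by
        rw [image_split q', inter_union_distrib_left, hqdisj.symm.inter_eq, union_empty,
          hq.image_eq]
    _ = (p : Perm U) '' E ∩ (q : Perm U) '' E := by
        rw [image_split p', union_inter_distrib_right, hpdisj.inter_eq, union_empty,
          hp.image_eq]

theorem exists_coherent_seq_image_inter_image_eq {A : ℕ → Set U} (hmono : Monotone A)
    (hfin : ∀ n, (A n).Finite) (hclosed : ∀ n, algCl G (A n) ⊆ A n) :
    ∃ p q : ℕ → G,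
      (∀ n, EqOn (p (n + 1) : Perm U) (p n : Perm U) (A n)) ∧
      (∀ n, EqOn (q (n + 1) : Perm U) (q n : Perm U) (A n)) ∧
      ∀ n, (p n : Perm U) '' A n ∩ (q n : Perm U) '' A n = A 0 := by
  choose nextP nextQ hP hQ hinter using fun n =>
    exists_eqOn_image_inter_image_eq (hclosed n) (hfin (n + 1)) (hmono n.le_succ)
  let s : ℕ → G × G := Nat.rec (1, 1) fun n s => (nextP n s.1 s.2, nextQ n s.1 s.2)
  refine ⟨fun n => (s n).1, fun n => (s n).2, fun n => hP n _ _, fun n => hQ n _ _, fun n => ?_⟩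
  induction n with
  | zero => simp [s]
  | succ n ih => exact (hinter n _ _).trans ih

end Extension

theorem eqOn_of_le_of_eqOn_succ {α β : Type*} {A : ℕ → Set α} {f : ℕ → α → β} (hmono : Monotone A)
    (hf : ∀ n, EqOn (f (n + 1)) (f n) (A n)) {m n : ℕ} (hmn : m ≤ n) :
    EqOn (f n) (f m) (A m) := by
  induction n, hmn using Nat.le_induction with
  | base => exact eqOn_refl _ _
  | succ n hmn ih => exact ((hf n).mono (hmono hmn)).trans ih

theorem exists_isAdherent_eqOn {U : Type*} {G : Subgroup (Perm U)} {A : ℕ → Set U}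
    {p : ℕ → G} (hmono : Monotone A) (hcover : ⋃ n, A n = univ)
    (hp : ∀ n, EqOn (p (n + 1) : Perm U) (p n : Perm U) (A n)) :
    ∃ f : U → U, IsAdherent G f ∧ ∀ n, EqOn f (p n : Perm U) (A n) := by
  choose k hk using iUnion_eq_univ_iff.mp hcover
  have hcoherent {m n : ℕ} (hmn : m ≤ n) : EqOn (p n : Perm U) (p m : Perm U) (A m) :=
    eqOn_of_le_of_eqOn_succ (f := fun n => (p n : Perm U)) hmono hp hmn
  have hlimit (n : ℕ) : EqOn (fun x => (p (k x) : Perm U) x) (p n : Perm U) (A n) := fun x hx => by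
    rcases le_total (k x) n with h | h
    · exact (hcoherent h (hk x)).symm
    · exact hcoherent h hx
  refine ⟨fun x => (p (k x) : Perm U) x, fun F => ?_, hlimit⟩
  exact ⟨p (F.sup k), (p _).2, fun x hx => hlimit _ (hmono (Finset.le_sup hx) (hk x))⟩

theorem range_inter_range_eq_of_forall_image_inter_image_eq {ι α β : Type*} [Preorder ι]
    [IsDirectedOrder ι] [Nonempty ι] {A : ι → Set α} {B : Set β} {f g : α → β} (hmono : Monotone A)
    (hcover : ⋃ i, A i = univ) (h : ∀ i, f '' A i ∩ g '' A i = B) : range f ∩ range g = B := by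
  have range_eq (r : α → β) : range r = ⋃ i, r '' A i := by
    rw [← image_univ, ← hcover, image_iUnion]
  have image_monotone (r : α → β) : Monotone fun i => r '' A i := fun _ _ hij =>
    image_mono (hmono hij)
  rw [range_eq f, range_eq g, ← iUnion_inter_of_monotone (image_monotone f) (image_monotone g),
    iUnion_congr h, iUnion_const]

/-- Theorem: if `G` is algebraically finite then for every finite `F ⊆ U` there are two
copies for `G` whose intersection is the algebraic closure of `F`. -/
theorem exists_two_copies_inter_algCl {U : Type*} [Countable U] [Infinite U]
    (G : Subgroup (Equiv.Perm U)) (hG : AlgebraicallyFinite G) (F : Finset U) :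
    ∃ C D : Set U, IsCopy G C ∧ IsCopy G D ∧ C ∩ D = algCl G ↑F := by
  obtain ⟨A, hzero, hmono, hfin, hclosed, hcover⟩ := hG.exists_exhaustion F.finite_toSet
  obtain ⟨p, q, hp, hq, hinter⟩ := exists_coherent_seq_image_inter_image_eq hmono hfin hclosed
  obtain ⟨f, hf, hfp⟩ := exists_isAdherent_eqOn hmono hcover hp
  obtain ⟨g, hg, hgq⟩ := exists_isAdherent_eqOn hmono hcover hq
  refine ⟨range f, range g, ⟨f, hf, rfl⟩, ⟨g, hg, rfl⟩, ?_⟩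
  refine range_inter_range_eq_of_forall_image_inter_image_eq hmono hcover fun n => ?_
  rw [(hfp n).image_eq, (hgq n).image_eq, hinter n, hzero]
end

section
/- Assume that for every finite subset F of U every orbit of the pointwise stabilizer G⟨F⟩ on U \ F is infinite. Then there exists a subset A of U with infinite complement such that every subset A' of U containing A is a copy for G. In particular, there is an order embedding of the power set of ℕ ordered by inclusion into the set of copies for G ordered by inclusion. -/
/-!
Let `A` contain a point of every orbit of `G⟨F⟩` on `U \ F`, for every finite `F`. Since there are
only countably many of these orbits and each of them is infinite, `A` can be chosen with infinite
complement. A superset `C` of `A` still meets all of them, so a permutation `g ∈ G` mapping a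
finite set `F` into `C` can be modified to map a further point `x` into `C` without moving the
images of `F`: compose it with an element of `G⟨g '' F⟩` that moves `g x` into `C`. Every point of
`C` is already a value of `g`, so a back-and-forth construction yields an adherent function with
range `C`.
-/

theorem exists_injective_forall_mem_of_infinite {ι α : Type*} [Countable ι] {S : ι → Set α}
    (hS : ∀ i, (S i).Infinite) : ∃ f : ι → α, Function.Injective f ∧ ∀ i, f i ∈ S i := by
  classical
  obtain ⟨e, he⟩ := exists_injective_nat ι
  -- As `e` is injective, a finite set `s ≠ ∅` of indices has some `i` with `#s ≤ e i + 1 = #(t i)`.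
  choose t htS htcard using fun i => (hS i).exists_subset_card_eq (e i + 1)
  have hall (s : Finset ι) : s.card ≤ (s.biUnion t).card := by
    obtain rfl | hs := s.eq_empty_or_nonempty
    · simp
    obtain ⟨i, hi, hmax⟩ := s.exists_max_image e hs
    calc s.card ≤ (Finset.range (e i + 1)).card :=
          Finset.card_le_card_of_injOn e
            (fun j hj => Finset.mem_coe.2 (Finset.mem_range_succ_iff.2 (hmax j hj))) he.injOn
      _ = (t i).card := by rw [Finset.card_range, htcard]
      _ ≤ (s.biUnion t).card := Finset.card_le_card (Finset.subset_biUnion_of_mem t hi)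
  obtain ⟨f, hf, hft⟩ := (Finset.all_card_le_biUnion_card_iff_exists_injective t).1 hall
  exact ⟨f, hf, fun i => htS i (hft i)⟩

theorem exists_infinite_compl_forall_inter_nonempty {ι α : Type*} [Countable ι] [Infinite α]
    {S : ι → Set α} (hS : ∀ i, (S i).Infinite) :
    ∃ A : Set α, Aᶜ.Infinite ∧ ∀ i, (S i ∩ A).Nonempty := by
  -- Infinitely many extra points are chosen from `univ`, to be left out of `A`.
  have hS' : ∀ i : ι ⊕ ℕ, (Sum.elim S (fun _ => Set.univ) i).Infinite :=
    Sum.rec hS fun _ => Set.infinite_univ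
  obtain ⟨f, hf, hfS⟩ := exists_injective_forall_mem_of_infinite hS'
  refine ⟨Set.range (f ∘ Sum.inl), ?_, fun i => ⟨f (.inl i), hfS (.inl i), i, rfl⟩⟩
  refine (Set.infinite_range_of_injective (hf.comp Sum.inr_injective)).mono ?_
  rintro _ ⟨n, rfl⟩ ⟨i, hi⟩
  exact Sum.inl_ne_inr (hf hi)

theorem union_image_subset_union_image_iff {α β : Type*} {A : Set α} {f : β → α}
    (hf : Function.Injective f) (hfA : ∀ b, f b ∉ A) {S T : Set β} :
    A ∪ f '' S ⊆ A ∪ f '' T ↔ S ⊆ T := by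
  refine ⟨fun h b hb => ?_, fun h => Set.union_subset_union_right A (Set.image_mono h)⟩
  have hbT : f b ∈ f '' T := (h (Or.inr (Set.mem_image_of_mem f hb))).resolve_left (hfA b)
  exact (hf.mem_set_image).1 hbT

section Copies

variable {U : Type*} {G : Subgroup (Equiv.Perm U)} {C : Set U}

theorem mem_orbit_fixingSubgroup_iff {s : Set U} {x y : U} :
    y ∈ MulAction.orbit (fixingSubgroup G s) x ↔ ∃ g ∈ G, (∀ a ∈ s, g a = a) ∧ g x = y := by
  constructor
  · rintro ⟨⟨⟨g, hg⟩, hfix⟩, rfl⟩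
    exact ⟨g, hg, (mem_fixingSubgroup_iff G).1 hfix, rfl⟩
  · rintro ⟨g, hg, hfix, rfl⟩
    exact ⟨⟨⟨g, hg⟩, (mem_fixingSubgroup_iff G).2 hfix⟩, rfl⟩

/-- A finite approximation to an adherent function with range `C`: a permutation in `G`, of which
only the restriction to the finite set `dom` matters, and which maps `dom` into `C`. -/
structure PartialCopy (G : Subgroup (Equiv.Perm U)) (C : Set U) where
  dom : Finset U
  perm : Equiv.Perm U
  perm_mem : perm ∈ G
  perm_mem_of_mem_dom : ∀ x ∈ dom, perm x ∈ C

namespace PartialCopy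

/-- Partial copies are preordered by extension of the restrictions to `dom`. -/
instance : Preorder (PartialCopy G C) where
  le p q := p.dom ⊆ q.dom ∧ ∀ x ∈ p.dom, p.perm x = q.perm x
  le_refl _ := ⟨Finset.Subset.rfl, fun _ _ => rfl⟩
  le_trans _ _ _ hpq hqr :=
    ⟨hpq.1.trans hqr.1, fun x hx => (hpq.2 x hx).trans (hqr.2 x (hpq.1 hx))⟩

instance : Inhabited (PartialCopy G C) :=
  ⟨{ dom := ∅, perm := 1, perm_mem := G.one_mem, perm_mem_of_mem_dom := by simp }⟩

theorem isCofinal_setOf_mem_dom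
    (hC : ∀ F : Finset U, ∀ x ∉ F, (MulAction.orbit (fixingSubgroup G (F : Set U)) x ∩ C).Nonempty)
    (x : U) : IsCofinal {p : PartialCopy G C | x ∈ p.dom} := by
  classical
  intro p
  by_cases hx : x ∈ p.dom
  · exact ⟨p, hx, le_rfl⟩
  obtain ⟨y, hy, hyC⟩ := hC (p.dom.image p.perm) (p.perm x) (by simpa using hx)
  obtain ⟨k, hk, hfix, rfl⟩ := mem_orbit_fixingSubgroup_iff.1 hy
  have hagree : ∀ z ∈ p.dom, k (p.perm z) = p.perm z := fun z hz =>
    hfix _ (Finset.mem_image_of_mem _ hz)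
  let q : PartialCopy G C :=
    { dom := insert x p.dom
      perm := k * p.perm
      perm_mem := G.mul_mem hk p.perm_mem
      perm_mem_of_mem_dom := (Finset.forall_mem_insert _ _ _).2
        ⟨hyC, fun z hz => (hagree z hz).symm ▸ p.perm_mem_of_mem_dom z hz⟩ }
  exact ⟨q, Finset.mem_insert_self _ _, Finset.subset_insert _ _, fun z hz => (hagree z hz).symm⟩

theorem isCofinal_setOf_exists_perm_eq {c : U} (hc : c ∈ C) :
    IsCofinal {p : PartialCopy G C | ∃ x ∈ p.dom, p.perm x = c} := by
  classical
  intro p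
  let q : PartialCopy G C :=
    { dom := insert (p.perm.symm c) p.dom
      perm := p.perm
      perm_mem := p.perm_mem
      perm_mem_of_mem_dom := (Finset.forall_mem_insert _ _ _).2
        ⟨(p.perm.apply_symm_apply c).symm ▸ hc, p.perm_mem_of_mem_dom⟩ }
  exact ⟨q, ⟨p.perm.symm c, Finset.mem_insert_self _ _, p.perm.apply_symm_apply c⟩,
    Finset.subset_insert _ _, fun _ _ => rfl⟩

theorem exists_isAdherent_forall_mem_ideal {I : Order.Ideal (PartialCopy G C)}
    (hI : ∀ x, ∃ p ∈ I, x ∈ p.dom) :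
    ∃ f : U → U, IsAdherent G f ∧ ∀ p ∈ I, ∀ x ∈ p.dom, f x = p.perm x := by
  choose q hqI hq using hI
  have hcompat : ∀ p ∈ I, ∀ x ∈ p.dom, (q x).perm x = p.perm x := by
    intro p hp x hx
    obtain ⟨r, -, hqr, hpr⟩ := I.directed (q x) (hqI x) p hp
    exact (hqr.2 x (hq x)).trans (hpr.2 x hx).symm
  refine ⟨fun x => (q x).perm x, fun F => ?_, hcompat⟩
  obtain ⟨p, hp, hFp⟩ : ∃ p ∈ I, (F : Set U) ⊆ p.dom :=
    DirectedOn.exists_mem_subset_of_finset_subset_biUnion I.nonempty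
      (I.directed.mono' fun _ _ _ _ h => Finset.coe_subset.2 h.1)
      fun x _ => Set.mem_biUnion (hqI x) (hq x)
  exact ⟨p.perm, p.perm_mem, fun x hx => hcompat p hp x (hFp hx)⟩

end PartialCopy

theorem isCopy_of_forall_orbit_inter_nonempty [Countable U]
    (hC : ∀ F : Finset U, ∀ x ∉ F,
      (MulAction.orbit (fixingSubgroup G (F : Set U)) x ∩ C).Nonempty) :
    IsCopy G C := by
  let D : U ⊕ C → Order.Cofinal (PartialCopy G C) := Sum.elim
    (fun x => ⟨_, PartialCopy.isCofinal_setOf_mem_dom hC x⟩)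
    (fun c => ⟨_, PartialCopy.isCofinal_setOf_exists_perm_eq c.2⟩)
  let _ : Encodable (U ⊕ C) := Encodable.ofCountable _
  let I := Order.idealOfCofinals default D
  have hmeets : ∀ i, ∃ p, p ∈ D i ∧ p ∈ I := Order.cofinal_meets_idealOfCofinals default D
  have hdom (x : U) : ∃ p ∈ I, x ∈ p.dom := (hmeets (.inl x)).imp fun _ => And.symm
  obtain ⟨f, hf, hfI⟩ := PartialCopy.exists_isAdherent_forall_mem_ideal hdom
  refine ⟨f, hf, Set.Subset.antisymm (Set.range_subset_iff.2 fun x => ?_) fun c hc => ?_⟩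
  · obtain ⟨p, hp, hx⟩ := hdom x
    exact hfI p hp x hx ▸ p.perm_mem_of_mem_dom x hx
  · obtain ⟨p, ⟨x, hx, hxc⟩, hp⟩ := hmeets (.inr ⟨c, hc⟩)
    exact ⟨x, (hfI p hp x hx).trans hxc⟩

theorem exists_infinite_compl_forall_superset_isCopy [Countable U] [Infinite U]
    (hG : ∀ F : Finset U, ∀ x ∉ F, (MulAction.orbit (fixingSubgroup G (F : Set U)) x).Infinite) :
    ∃ A : Set U, Aᶜ.Infinite ∧ ∀ A' : Set U, A ⊆ A' → IsCopy G A' := by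
  obtain ⟨A, hA, hmeets⟩ := exists_infinite_compl_forall_inter_nonempty
    fun p : {p : Finset U × U // p.2 ∉ p.1} => hG p.1.1 p.1.2 p.2
  refine ⟨A, hA, fun A' hAA' => isCopy_of_forall_orbit_inter_nonempty fun F x hx => ?_⟩
  exact (hmeets ⟨(F, x), hx⟩).mono (Set.inter_subset_inter_right _ hAA')

end Copies

/-- Theorem: if for every finite `F` every orbit of the pointwise stabilizer of `F` on
`U \ F` is infinite, then there is a co-infinite set `A` all of whose supersets are
copies for `G`; in particular the powerset of `ℕ` order-embeds into the poset of
copies for `G`. -/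
theorem bernstein_copies {U : Type*} [Countable U] [Infinite U]
    (G : Subgroup (Equiv.Perm U))
    (h : ∀ F : Finset U, ∀ x : U, x ∉ F →
      Set.Infinite {y | ∃ g ∈ G, (∀ a ∈ F, g a = a) ∧ g x = y}) :
    (∃ A : Set U, Set.Infinite Aᶜ ∧ ∀ A' : Set U, A ⊆ A' → IsCopy G A') ∧
      Nonempty (Set ℕ ↪o {C : Set U // IsCopy G C}) := by
  obtain ⟨A, hA, hcopy⟩ := exists_infinite_compl_forall_superset_isCopy
    fun F x hx => (h F x hx).mono fun _ => mem_orbit_fixingSubgroup_iff.2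
  refine ⟨⟨A, hA, hcopy⟩, ?_⟩
  let e : ℕ ↪ ↥Aᶜ := hA.natEmbedding
  have he : Function.Injective fun n => (e n : U) := Subtype.val_injective.comp e.injective
  exact ⟨OrderEmbedding.ofMapLEIff
    (fun S => ⟨A ∪ (fun n => (e n : U)) '' S, hcopy _ Set.subset_union_left⟩)
    fun _ _ => union_image_subset_union_image_iff he fun n => (e n).2⟩
end
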